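/- Let G be an abelian group. Suppose that for each color i (1 ≤ i ≤ q), A_i = F_i + M_i, where F_i ⊆ G is a finite nonempty set with |F_i| = k_i and M_i ⊆ G is a submonoid. Then for every r ∈ ℕ and every h ∈ ℕ₀^q there exists a set X_h ⊆ G such that (rh)·𝒜 ⊆ X_h + h·𝒜 and |X_h| ≤ ∏_{i=1}^q C((r+1)(k_i−1), k_i−1). In particular, 𝒜 is a chromatic (r,ℓ)-approximate group with ℓ = ∏_{i=1}^q C((r+1)(k_i−1), k_i−1). -/

import Mathlib

open Pointwise BigOperators

/-- The `h`-fold iterated sumset `hA = A + ⋯ + A` (`h` times), with `0A = {0}`. -/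
def hfold {G : Type*} [AddCommMonoid G] : ℕ → Set G → Set G
  | 0, _ => {0}
  | n + 1, A => A + hfold n A

/-- The chromatic sumset `h·𝒜 = h₁A₁ + ⋯ + h_qA_q`. -/
def chromSum {G : Type*} [AddCommMonoid G] {q : ℕ} (h : Fin q → ℕ) (A : Fin q → Set G) :
    Set G :=
  ∑ i, hfold (h i) (A i)

/-! Translate `F` so that `F = {0} ∪ E` with `d = #E = k - 1`. Then `nF` consists of the sums
`∑ e ∈ E, c e • e` with `∑ e ∈ E, c e ≤ n`. Dividing every coefficient by `s = ⌊h / d⌋ + 1` with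
remainder writes an element of `(rh)F` as `s` times an element of `(rd)F` plus an element of `hF`:
the quotients sum to at most `rh / s ≤ rd`, and the `d` remainders to at most `d ⌊h / d⌋ ≤ h`.
So `(rh)F` is covered by at most `#((rd)F) ≤ C((r + 1)d, d)` translates of `hF`. The submonoid
costs nothing, because `(rh)M ⊆ hM`, and covering numbers multiply under addition of sets. -/

open Finset

section DivMod

variable {ι : Type*} (E : Finset ι) (c : ι → ℕ) (h : ℕ)

theorem sum_mod_div_card_add_one_le : ∑ i ∈ E, c i % (h / #E + 1) ≤ h :=
  calc
    ∑ i ∈ E, c i % (h / #E + 1) ≤ #E • (h / #E) :=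
      sum_le_card_nsmul _ _ _ fun _ _ ↦ Nat.le_of_lt_succ (Nat.mod_lt _ (Nat.succ_pos _))
    _ ≤ h := Nat.mul_div_le _ _

variable {E c h}

theorem sum_div_div_card_add_one_le {r : ℕ} (hc : ∑ i ∈ E, c i ≤ r * h) :
    ∑ i ∈ E, c i / (h / #E + 1) ≤ r * #E := by
  obtain rfl | hE := E.eq_empty_or_nonempty
  · simp
  refine Nat.le_of_mul_le_mul_left ?_ (Nat.succ_pos (h / #E))
  calc
    (h / #E + 1) * ∑ i ∈ E, c i / (h / #E + 1) ≤ ∑ i ∈ E, c i := by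
      rw [mul_sum]
      exact sum_le_sum fun _ _ ↦ Nat.mul_div_le _ _
    _ ≤ r * h := hc
    _ ≤ r * (#E * (h / #E + 1)) := Nat.mul_le_mul_left _ (Nat.lt_mul_div_succ h hE.card_pos).le
    _ = (h / #E + 1) * (r * #E) := by ring

end DivMod

theorem nsmul_addSubmonoid_subset_nsmul_mul {G : Type*} [AddMonoid G] (M : AddSubmonoid G)
    (r h : ℕ) : (r * h) • (M : Set G) ⊆ h • (M : Set G) := by
  obtain rfl | hh := eq_or_ne h 0
  · simp
  · rw [coe_set_nsmul hh]
    exact AddSubmonoid.nsmul_subset subset_rfl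

theorem covByVAdd_singleton {G : Type*} [AddGroup G] (a b : G) : CovByVAdd G 1 {a} {b} :=
  ⟨{a - b}, by simp⟩

section AddCommMonoid

variable {G : Type*} [AddCommMonoid G]

-- For `n : ℕ` and `A : Set G`, `n • A` is the iterated sumset, not the dilate `(n • ·) '' A`.
theorem hfold_eq_nsmul (n : ℕ) (A : Set G) : hfold n A = n • A := by
  induction n with
  | zero => rw [hfold, zero_nsmul, Set.singleton_zero]
  | succ n ih => rw [hfold, ih, succ_nsmul']

theorem covByVAdd_add {K L : ℝ} {A B C D : Set G} (hAB : CovByVAdd G K A B)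
    (hCD : CovByVAdd G L C D) : CovByVAdd G (K * L) (A + C) (B + D) := by
  classical
  have hK := hAB.nonneg
  obtain ⟨X, hX, hAX⟩ := hAB
  obtain ⟨Y, hY, hCY⟩ := hCD
  refine ⟨X + Y, ?_, ?_⟩
  · calc
      (#(X + Y) : ℝ) ≤ #X * #Y := mod_cast card_add_le
      _ ≤ K * L := by gcongr
  · calc
      A + C ⊆ (X + B) + (Y + D) := Set.add_subset_add hAX hCY
      _ = (↑(X + Y) : Set G) +ᵥ (B + D) := by rw [coe_add, vadd_eq_add, add_add_add_comm]

theorem covByVAdd_sum {ι : Type*} (s : Finset ι) {K : ι → ℝ} {A B : ι → Set G}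
    (hAB : ∀ i ∈ s, CovByVAdd G (K i) (A i) (B i)) :
    CovByVAdd G (∏ i ∈ s, K i) (∑ i ∈ s, A i) (∑ i ∈ s, B i) := by
  induction s using Finset.cons_induction with
  | empty => simp
  | cons i s hi ih =>
    rw [prod_cons, sum_cons, sum_cons]
    exact covByVAdd_add (hAB i (mem_cons_self i s)) (ih fun j hj ↦ hAB j (mem_cons_of_mem hj))

theorem card_nsmul_le_multichoose [DecidableEq G] (F : Finset G) (n : ℕ) :
    #(n • F) ≤ (#F).multichoose n := by
  have sum_surj : n • F ⊆ univ.image fun t : Sym F n ↦ ((t : Multiset F).map (↑)).sum := by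
    intro g hg
    obtain ⟨f, rfl⟩ := mem_nsmul.1 hg
    refine mem_image.2 ⟨⟨List.ofFn f, by simp⟩, mem_univ _, ?_⟩
    simp [List.map_ofFn, Function.comp_def]
  calc
    #(n • F) ≤ Fintype.card (Sym F n) := (card_le_card sum_surj).trans card_image_le
    _ = (#F).multichoose n := by rw [Sym.card_sym_eq_multichoose, Fintype.card_coe]

theorem card_nsmul_insert_zero_le [DecidableEq G] (E : Finset G) (n : ℕ) :
    #(n • insert 0 E) ≤ (n + #E).choose #E :=
  calc
    #(n • insert 0 E) ≤ (#(insert 0 E) + n - 1).choose n := by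
      rw [← Nat.multichoose_eq]
      exact card_nsmul_le_multichoose _ n
    _ ≤ (n + #E).choose n := by
      have card_insert : #(insert 0 E) ≤ #E + 1 := card_insert_le 0 E
      exact Nat.choose_le_choose n (by omega)
    _ = (n + #E).choose #E := Nat.choose_symm_add

theorem mem_nsmul_insert_zero_iff {E : Finset G} {n : ℕ} {g : G} :
    g ∈ n • (insert 0 ↑E : Set G) ↔
      ∃ c : G → ℕ, ∑ e ∈ E, c e ≤ n ∧ ∑ e ∈ E, c e • e = g := by
  classical
  constructor
  · intro hg
    induction n generalizing g with
    | zero => exact ⟨0, by simpa [eq_comm] using hg⟩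
    | succ n ih =>
      rw [succ_nsmul] at hg
      obtain ⟨x, hx, a, rfl | ha, rfl⟩ := hg
      · obtain ⟨c, hc, rfl⟩ := ih hx
        exact ⟨c, hc.trans n.le_succ, (add_zero _).symm⟩
      · obtain ⟨c, hc, rfl⟩ := ih hx
        have ha : a ∈ E := ha
        refine ⟨c + Pi.single a 1, ?_, ?_⟩
        · simpa [sum_add_distrib, ha] using hc
        · simp [sum_add_distrib, add_smul, Pi.single_apply, ite_smul, ha]
  · rintro ⟨c, hc, rfl⟩
    have sum_mem : ∑ e ∈ E, c e • e ∈ ∑ e ∈ E, c e • (insert 0 ↑E : Set G) :=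
      Set.finsetSum_mem_finsetSum _ _ _ fun e he ↦
        Set.nsmul_mem_nsmul (Set.mem_insert_of_mem 0 he)
    rw [sum_nsmul_assoc] at sum_mem
    exact Set.nsmul_subset_nsmul_right (Set.mem_insert 0 _) hc sum_mem

theorem nsmul_insert_zero_subset_image_add (E : Finset G) (r h : ℕ) :
    (r * h) • (insert 0 ↑E : Set G) ⊆
      (fun g ↦ (h / #E + 1) • g) '' ((r * #E) • (insert 0 ↑E : Set G)) +
        h • (insert 0 ↑E : Set G) := by
  intro g hg
  obtain ⟨c, hc, rfl⟩ := mem_nsmul_insert_zero_iff.1 hg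
  set s := h / #E + 1
  have quotients_mem : ∑ e ∈ E, (c e / s) • e ∈ (r * #E) • (insert 0 ↑E : Set G) :=
    mem_nsmul_insert_zero_iff.2 ⟨_, sum_div_div_card_add_one_le hc, rfl⟩
  have remainders_mem : ∑ e ∈ E, (c e % s) • e ∈ h • (insert 0 ↑E : Set G) :=
    mem_nsmul_insert_zero_iff.2 ⟨_, sum_mod_div_card_add_one_le E c h, rfl⟩
  refine ⟨_, ⟨_, quotients_mem, rfl⟩, _, remainders_mem, ?_⟩
  calc
    s • ∑ e ∈ E, (c e / s) • e + ∑ e ∈ E, (c e % s) • e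
        = ∑ e ∈ E, (s * (c e / s) + c e % s) • e := by
      simp only [smul_sum, smul_smul, add_smul, sum_add_distrib]
    _ = ∑ e ∈ E, c e • e := by simp only [Nat.div_add_mod]

theorem covByVAdd_nsmul_insert_zero (E : Finset G) (r h : ℕ) :
    CovByVAdd G (((r + 1) * #E).choose #E : ℕ)
      ((r * h) • (insert 0 ↑E : Set G)) (h • (insert 0 ↑E : Set G)) := by
  classical
  refine ⟨((r * #E) • insert 0 E).image fun g ↦ (h / #E + 1) • g, ?_, ?_⟩
  · rw [add_one_mul]
    exact mod_cast card_image_le.trans (card_nsmul_insert_zero_le E _)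
  · rw [coe_image, coe_nsmul, coe_insert]
    exact nsmul_insert_zero_subset_image_add E r h

end AddCommMonoid

section AddCommGroup

variable {G : Type*} [AddCommGroup G]

theorem exists_coe_eq_singleton_add_insert_zero {F : Finset G} (hF : F.Nonempty) :
    ∃ (f : G) (E : Finset G), #E = #F - 1 ∧ (F : Set G) = {f} + insert 0 ↑E := by
  classical
  obtain ⟨f, hf⟩ := hF
  refine ⟨f, (F.erase f).image (· - f), ?_, ?_⟩
  · rw [card_image_of_injective _ sub_left_injective, card_erase_of_mem hf]
  · rw [Set.singleton_add, coe_image, Set.image_insert_eq, Set.image_image]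
    simp [hf]

theorem covByVAdd_nsmul_finset {F : Finset G} (hF : F.Nonempty) (r h : ℕ) :
    CovByVAdd G (((r + 1) * (#F - 1)).choose (#F - 1) : ℕ)
      ((r * h) • (F : Set G)) (h • (F : Set G)) := by
  obtain ⟨f, E, hE, hFE⟩ := exists_coe_eq_singleton_add_insert_zero hF
  rw [← hE, hFE, nsmul_add, nsmul_add, Set.nsmul_singleton, Set.nsmul_singleton]
  simpa only [one_mul] using
    covByVAdd_add (covByVAdd_singleton ((r * h) • f) (h • f)) (covByVAdd_nsmul_insert_zero E r h)

theorem covByVAdd_nsmul_finset_add_addSubmonoid {F : Finset G} (hF : F.Nonempty)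
    (M : AddSubmonoid G) (r h : ℕ) :
    CovByVAdd G (((r + 1) * (#F - 1)).choose (#F - 1) : ℕ)
      ((r * h) • ((F : Set G) + (M : Set G))) (h • ((F : Set G) + (M : Set G))) := by
  rw [nsmul_add, nsmul_add]
  simpa only [mul_one] using covByVAdd_add (covByVAdd_nsmul_finset hF r h)
    (.of_subset (nsmul_addSubmonoid_subset_nsmul_mul M r h))

end AddCommGroup

/-- Finite-set-plus-submonoid color classes: if `Aᵢ = Fᵢ + Mᵢ` with `Fᵢ` finite nonempty
of size `kᵢ` and `Mᵢ` a submonoid, then for every `r` and every `h` there is `X_h` with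
`(rh)·𝒜 ⊆ X_h + h·𝒜` and `|X_h| ≤ ∏ᵢ C((r+1)(kᵢ−1), kᵢ−1)`; in particular `𝒜` is a
chromatic `(r, ∏ᵢ C((r+1)(kᵢ−1), kᵢ−1))`-approximate group. -/
theorem stmt10 {G : Type*} [AddCommGroup G] {q : ℕ} (A : Fin q → Set G)
    (F : Fin q → Finset G) (M : Fin q → Set G) (k : Fin q → ℕ)
    (hFne : ∀ i, (F i).Nonempty) (hFcard : ∀ i, (F i).card = k i)
    (hM0 : ∀ i, (0 : G) ∈ M i) (hMadd : ∀ i, M i + M i ⊆ M i)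
    (hA : ∀ i, A i = ↑(F i) + M i) (r : ℕ) (hr : 0 < r) :
    ∀ h : Fin q → ℕ,
      ∃ X : Finset G, X.card ≤ ∏ i, ((r + 1) * (k i - 1)).choose (k i - 1) ∧
        chromSum (fun i => r * h i) A ⊆ ↑X + chromSum h A := by
  intro h
  have color_cov (i : Fin q) : CovByVAdd G (((r + 1) * (k i - 1)).choose (k i - 1) : ℕ)
      (hfold (r * h i) (A i)) (hfold (h i) (A i)) := by
    let N : AddSubmonoid G :=
      { carrier := M i
        zero_mem' := hM0 i
        add_mem' := fun ha hb ↦ hMadd i (Set.add_mem_add ha hb) }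
    rw [hfold_eq_nsmul, hfold_eq_nsmul, hA i, ← hFcard i]
    exact covByVAdd_nsmul_finset_add_addSubmonoid (hFne i) N r (h i)
  obtain ⟨X, hX, hsub⟩ := covByVAdd_sum univ fun i _ ↦ color_cov i
  exact ⟨X, mod_cast hX, hsub⟩
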